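/- For any bipartite state ρ^{AB} on ℂ^d ⊗ H^B: S(Z^A|B)_ρ + S(X^A|B)_ρ ≥ log₂ d + S(A|B)_ρ, where S(Z^A|B)_ρ (resp. S(X^A|B)_ρ) is the conditional entropy of ρ after dephasing A in the Z (resp. X) eigenbasis. -/

import Mathlib

open Matrix Kronecker ComplexOrder

noncomputable section

/-- ω = e^{2πi/d} -/
noncomputable def qomega (d : ℕ) : ℂ := Complex.exp (2 * Real.pi * Complex.I / d)

/-- Generalized Pauli Z: Z|k⟩ = ω^k |k⟩. -/
noncomputable def pauliZ (d : ℕ) : Matrix (Fin d) (Fin d) ℂ :=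
  Matrix.diagonal fun k : Fin d => qomega d ^ (k : ℕ)

/-- Generalized Pauli X: X|k⟩ = |k+1 mod d⟩. -/
noncomputable def pauliX (d : ℕ) [NeZero d] : Matrix (Fin d) (Fin d) ℂ :=
  Matrix.of fun i j : Fin d => if i = j + 1 then 1 else 0

/-- Fourier matrix: column j is |x̃_j⟩ = (1/√d) Σ_k ω^{jk} |k⟩. -/
noncomputable def fourierMat (d : ℕ) : Matrix (Fin d) (Fin d) ℂ :=
  Matrix.of fun k j : Fin d => qomega d ^ ((j : ℕ) * (k : ℕ)) / (Real.sqrt d : ℂ)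

/-- density operator predicate -/
def IsDensity {n : Type*} [Fintype n] (ρ : Matrix n n ℂ) : Prop :=
  ρ.PosSemidef ∧ ρ.trace = 1

/-- von Neumann entropy in base 2, via eigenvalues. -/
noncomputable def vN {n : Type*} [Fintype n] [DecidableEq n] (ρ : Matrix n n ℂ) : ℝ :=
  if h : ρ.IsHermitian then ∑ i, -(h.eigenvalues i * Real.logb 2 (h.eigenvalues i)) else 0

/-- complete dephasing in the standard basis -/
def dephase {n : Type*} [DecidableEq n] (M : Matrix n n ℂ) : Matrix n n ℂ :=
  Matrix.of fun i j => if i = j then M i j else 0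

/-- dephasing of the first (A) factor of a bipartite state, standard (Z eigen-) basis -/
def dephaseA {a b : Type*} [DecidableEq a] (M : Matrix (a × b) (a × b) ℂ) :
    Matrix (a × b) (a × b) ℂ :=
  Matrix.of fun p q => if p.1 = q.1 then M p q else 0

/-- dephasing of the first (A) factor in the Fourier (X eigen-) basis -/
noncomputable def dephaseXA (d : ℕ) {b : Type*} [Fintype b] [DecidableEq b]
    (M : Matrix (Fin d × b) (Fin d × b) ℂ) : Matrix (Fin d × b) (Fin d × b) ℂ :=
  (fourierMat d ⊗ₖ (1 : Matrix b b ℂ)) *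
    dephaseA ((fourierMat d ⊗ₖ (1 : Matrix b b ℂ))ᴴ * M * (fourierMat d ⊗ₖ (1 : Matrix b b ℂ))) *
    (fourierMat d ⊗ₖ (1 : Matrix b b ℂ))ᴴ

/-- reduced state on A of a bipartite state -/
def r2A {a b : Type*} [Fintype b] (M : Matrix (a × b) (a × b) ℂ) : Matrix a a ℂ :=
  Matrix.of fun i j => ∑ y : b, M (i, y) (j, y)

/-- reduced state on B of a bipartite state -/
def r2B {a b : Type*} [Fintype a] (M : Matrix (a × b) (a × b) ℂ) : Matrix b b ℂ :=
  Matrix.of fun i j => ∑ x : a, M (x, i) (x, j)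

/-- reduced state on AB of a tripartite state on A ⊗ B ⊗ E -/
def rAB {a b e : Type*} [Fintype e] (M : Matrix (a × b × e) (a × b × e) ℂ) :
    Matrix (a × b) (a × b) ℂ :=
  Matrix.of fun p q => ∑ x : e, M (p.1, p.2, x) (q.1, q.2, x)

/-- reduced state on AE of a tripartite state -/
def rAE {a b e : Type*} [Fintype b] (M : Matrix (a × b × e) (a × b × e) ℂ) :
    Matrix (a × e) (a × e) ℂ :=
  Matrix.of fun p q => ∑ y : b, M (p.1, y, p.2) (q.1, y, q.2)

/-- reduced state on A of a tripartite state -/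
def rA {a b e : Type*} [Fintype b] [Fintype e] (M : Matrix (a × b × e) (a × b × e) ℂ) :
    Matrix a a ℂ :=
  Matrix.of fun i j => ∑ y : b, ∑ x : e, M (i, y, x) (j, y, x)

/-- reduced state on B of a tripartite state -/
def rB {a b e : Type*} [Fintype a] [Fintype e] (M : Matrix (a × b × e) (a × b × e) ℂ) :
    Matrix b b ℂ :=
  Matrix.of fun i j => ∑ x : a, ∑ z : e, M (x, i, z) (x, j, z)

/-- reduced state on E of a tripartite state -/
def rE {a b e : Type*} [Fintype a] [Fintype b] (M : Matrix (a × b × e) (a × b × e) ℂ) :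
    Matrix e e ℂ :=
  Matrix.of fun i j => ∑ x : a, ∑ y : b, M (x, y, i) (x, y, j)

/-- matrix logarithm (base 2) of a Hermitian matrix via spectral decomposition -/
noncomputable def mlog {n : Type*} [Fintype n] [DecidableEq n] (M : Matrix n n ℂ) :
    Matrix n n ℂ :=
  if h : M.IsHermitian then
    (h.eigenvectorUnitary : Matrix n n ℂ) *
      Matrix.diagonal (fun i => (Real.logb 2 (h.eigenvalues i) : ℂ)) *
      (h.eigenvectorUnitary : Matrix n n ℂ)ᴴ
  else 0

/-- quantum relative entropy S(ρ‖σ) = Tr[ρ(log₂ρ − log₂σ)] -/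
noncomputable def relEnt {n : Type*} [Fintype n] [DecidableEq n] (ρ σ : Matrix n n ℂ) : ℝ :=
  ((ρ * (mlog ρ - mlog σ)).trace).re

/-- trace norm of a Hermitian matrix -/
noncomputable def traceNorm {n : Type*} [Fintype n] [DecidableEq n] (M : Matrix n n ℂ) : ℝ :=
  if h : M.IsHermitian then ∑ i, |h.eigenvalues i| else 0

/-!
Measuring relative entropy against the dephased state gives `S(Z^A|B) - S(A|B) = D(ρ ‖ Φ(ρ))`, where
`Φ` dephases `A` in the `Z` basis. Dephasing both arguments in the `X` basis does not increase the
relative entropy. As the two bases are mutually unbiased, it sends `Φ(ρ)` to `(1 / d) ⊗ ρ^B`, and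
the relative entropy of the `X`-dephased state to `(1 / d) ⊗ ρ^B` is `log₂ d - S(X^A|B)`.

Monotonicity under dephasing is reduced to a quadratic statement by writing
`p (log p - log q) = ∫₀¹ (p ^ 2 / ((1 - s) q + s p) - p) / (1 - s) ds`. Summed over pairs of
eigenvalues of `ρ` and `σ`, weighted by the overlaps of their eigenvectors, the term
`p ^ 2 / ((1 - s) q + s p)` becomes `tr (ρ W)` for the solution `W` of the Sylvester equation
`(1 - s) σ W + s W ρ = ρ`. This trace is the maximum over all `W` of
`Re (2 tr (ρ W) - tr (Wᴴ ((1 - s) σ W + s W ρ)))`, and dephasing `ρ` and `σ` restricts the maximum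
to the block diagonal `W`.
-/

section DoubleCalculus

variable {n : Type*} [Fintype n] [DecidableEq n] {ρ σ : Matrix n n ℂ}

/-- The double functional calculus `φ(L_σ, R_ρ)(1)` of a pair of Hermitian matrices, where `L_σ` and
`R_ρ` are left and right multiplication: for eigenvectors `v j` of `σ` and `u i` of `ρ` with
eigenvalues `q j` and `p i`, the matrix `∑ j, ∑ i, φ (q j) (p i) |v j⟩⟨v j|u i⟩⟨u i|`. It turns
trace expressions in `σ` and `ρ` into sums over pairs of eigenvalues. -/
def doubleCFC (hσ : σ.IsHermitian) (hρ : ρ.IsHermitian) (φ : ℝ → ℝ → ℝ) : Matrix n n ℂ :=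
  hσ.eigenvectorUnitary.1 *
    Matrix.of (fun j i => (φ (hσ.eigenvalues j) (hρ.eigenvalues i) : ℂ) *
      (hσ.eigenvectorUnitary.1ᴴ * hρ.eigenvectorUnitary.1) j i) *
    hρ.eigenvectorUnitary.1ᴴ

/-- The transition probability `|⟨v j|u i⟩|²` between the eigenvectors of two Hermitian matrices. -/
def eigenOverlap (hσ : σ.IsHermitian) (hρ : ρ.IsHermitian) (j i : n) : ℝ :=
  Complex.normSq ((hσ.eigenvectorUnitary.1ᴴ * hρ.eigenvectorUnitary.1) j i)

lemma conjTranspose_mul_self_eigenvectorUnitary (hρ : ρ.IsHermitian) :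
    hρ.eigenvectorUnitary.1ᴴ * hρ.eigenvectorUnitary.1 = 1 :=
  Unitary.coe_star_mul_self hρ.eigenvectorUnitary

lemma eigenvectorUnitary_mul_conjTranspose_self (hρ : ρ.IsHermitian) :
    hρ.eigenvectorUnitary.1 * hρ.eigenvectorUnitary.1ᴴ = 1 :=
  Unitary.coe_mul_star_self hρ.eigenvectorUnitary

lemma cfc_eq_mul_diagonal_mul (hρ : ρ.IsHermitian) (f : ℝ → ℝ) :
    cfc f ρ = hρ.eigenvectorUnitary.1 * diagonal (fun i => (f (hρ.eigenvalues i) : ℂ)) *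
      hρ.eigenvectorUnitary.1ᴴ := by
  rw [hρ.cfc_eq, Matrix.IsHermitian.cfc, Unitary.conjStarAlgAut_apply]
  rfl

lemma doubleCFC_congr (hσ : σ.IsHermitian) (hρ : ρ.IsHermitian) {φ ψ : ℝ → ℝ → ℝ}
    (h : ∀ j i, φ (hσ.eigenvalues j) (hρ.eigenvalues i) =
      ψ (hσ.eigenvalues j) (hρ.eigenvalues i)) :
    doubleCFC hσ hρ φ = doubleCFC hσ hρ ψ := by
  simp only [doubleCFC, h]

lemma doubleCFC_one (hσ : σ.IsHermitian) (hρ : ρ.IsHermitian) :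
    doubleCFC hσ hρ (fun _ _ => 1) = 1 := by
  have h : Matrix.of (fun j i => ((1 : ℝ) : ℂ) *
      (hσ.eigenvectorUnitary.1ᴴ * hρ.eigenvectorUnitary.1) j i) =
        hσ.eigenvectorUnitary.1ᴴ * hρ.eigenvectorUnitary.1 := by
    ext j i
    simp
  rw [doubleCFC, h, ← Matrix.mul_assoc, eigenvectorUnitary_mul_conjTranspose_self, Matrix.one_mul,
    eigenvectorUnitary_mul_conjTranspose_self]

lemma doubleCFC_add (hσ : σ.IsHermitian) (hρ : ρ.IsHermitian) (φ ψ : ℝ → ℝ → ℝ) :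
    doubleCFC hσ hρ φ + doubleCFC hσ hρ ψ = doubleCFC hσ hρ (fun q p => φ q p + ψ q p) := by
  rw [doubleCFC, doubleCFC, ← Matrix.add_mul, ← Matrix.mul_add, doubleCFC]
  congr 2
  ext j i
  simp [add_mul]

lemma cfc_mul_doubleCFC (hσ : σ.IsHermitian) (hρ : ρ.IsHermitian) (f : ℝ → ℝ) (φ : ℝ → ℝ → ℝ) :
    cfc f σ * doubleCFC hσ hρ φ = doubleCFC hσ hρ (fun q p => f q * φ q p) := by
  rw [cfc_eq_mul_diagonal_mul hσ, doubleCFC, doubleCFC, ← Matrix.mul_assoc, ← Matrix.mul_assoc,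
    Matrix.mul_assoc _ _ hσ.eigenvectorUnitary.1, conjTranspose_mul_self_eigenvectorUnitary,
    Matrix.mul_one, Matrix.mul_assoc hσ.eigenvectorUnitary.1]
  congr 2
  ext j i
  simp [mul_assoc]

lemma doubleCFC_mul_cfc (hσ : σ.IsHermitian) (hρ : ρ.IsHermitian) (f : ℝ → ℝ) (φ : ℝ → ℝ → ℝ) :
    doubleCFC hσ hρ φ * cfc f ρ = doubleCFC hσ hρ (fun q p => φ q p * f p) := by
  rw [cfc_eq_mul_diagonal_mul hρ, doubleCFC, doubleCFC, ← Matrix.mul_assoc, ← Matrix.mul_assoc,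
    Matrix.mul_assoc _ _ hρ.eigenvectorUnitary.1, conjTranspose_mul_self_eigenvectorUnitary,
    Matrix.mul_one, Matrix.mul_assoc hσ.eigenvectorUnitary.1]
  congr 2
  ext j i
  simp [mul_right_comm]

lemma cfc_mul_cfc_eq_doubleCFC (hσ : σ.IsHermitian) (hρ : ρ.IsHermitian) (f g : ℝ → ℝ) :
    cfc f σ * cfc g ρ = doubleCFC hσ hρ (fun q p => f q * g p) := by
  rw [← Matrix.mul_one (cfc f σ), ← doubleCFC_one hσ hρ, cfc_mul_doubleCFC, doubleCFC_mul_cfc]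
  simp only [mul_one]

lemma re_trace_doubleCFC (hσ : σ.IsHermitian) (hρ : ρ.IsHermitian) (φ : ℝ → ℝ → ℝ) :
    (doubleCFC hσ hρ φ).trace.re =
      ∑ j, ∑ i, eigenOverlap hσ hρ j i * φ (hσ.eigenvalues j) (hρ.eigenvalues i) := by
  set C := hσ.eigenvectorUnitary.1ᴴ * hρ.eigenvectorUnitary.1 with hC
  have hCstar : hρ.eigenvectorUnitary.1ᴴ * hσ.eigenvectorUnitary.1 = Cᴴ := by
    rw [hC, Matrix.conjTranspose_mul, Matrix.conjTranspose_conjTranspose]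
  rw [doubleCFC, Matrix.mul_assoc, Matrix.trace_mul_comm, Matrix.mul_assoc, hCstar, ← hC]
  simp only [Matrix.trace, Matrix.diag_apply, Matrix.mul_apply, Complex.re_sum, Matrix.of_apply,
    Matrix.conjTranspose_apply]
  refine Finset.sum_congr rfl fun j _ => Finset.sum_congr rfl fun i _ => ?_
  rw [eigenOverlap, ← hC, mul_assoc, Complex.re_ofReal_mul, mul_comm, Complex.star_def,
    Complex.mul_conj, Complex.ofReal_re]

lemma re_trace_cfc_mul_cfc (hσ : σ.IsHermitian) (hρ : ρ.IsHermitian) (f g : ℝ → ℝ) :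
    (cfc f σ * cfc g ρ).trace.re =
      ∑ j, ∑ i, eigenOverlap hσ hρ j i * (f (hσ.eigenvalues j) * g (hρ.eigenvalues i)) := by
  rw [cfc_mul_cfc_eq_doubleCFC hσ hρ, re_trace_doubleCFC]

lemma re_trace_eq_sum_eigenOverlap (hσ : σ.IsHermitian) (hρ : ρ.IsHermitian) :
    ρ.trace.re = ∑ j, ∑ i, eigenOverlap hσ hρ j i * hρ.eigenvalues i := by
  have h := re_trace_cfc_mul_cfc hσ hρ (fun _ => 1) id
  rw [cfc_const_one ℝ σ hσ.isSelfAdjoint, cfc_id ℝ ρ hρ.isSelfAdjoint, Matrix.one_mul] at h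
  simpa only [one_mul, id_eq] using h

lemma eigenOverlap_mul_eigenvalues_eq_zero (hσ : σ.IsHermitian) (hρ : ρ.IsHermitian)
    (hker : ∀ x, σ *ᵥ x = 0 → ρ *ᵥ x = 0) {j : n} (hj : hσ.eigenvalues j = 0) (i : n) :
    eigenOverlap hσ hρ j i * hρ.eigenvalues i = 0 := by
  set U := hρ.eigenvectorUnitary.1 with hU
  set V := hσ.eigenvectorUnitary.1 with hV
  have hcol : ρ *ᵥ V.col j = 0 := hker _ (by
    rw [hV, hσ.eigenvectorUnitary_col_eq, hσ.mulVec_eigenvectorBasis, hj, zero_smul])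
  have hdiag : (ρ * V)ᴴ * U = Vᴴ * U * diagonal (fun i => (hρ.eigenvalues i : ℂ)) := by
    have hspec : ρ * U = U * diagonal (fun i => (hρ.eigenvalues i : ℂ)) := by
      calc ρ * U = U * diagonal (fun i => (hρ.eigenvalues i : ℂ)) * Uᴴ * U := by
            congr 1
            exact (cfc_id ℝ ρ hρ.isSelfAdjoint).symm.trans (cfc_eq_mul_diagonal_mul hρ id)
        _ = _ := by
            rw [Matrix.mul_assoc, hU, conjTranspose_mul_self_eigenvectorUnitary, Matrix.mul_one]
    rw [Matrix.conjTranspose_mul, hρ.eq, Matrix.mul_assoc, hspec, Matrix.mul_assoc]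
  have hentry : ((ρ * V)ᴴ * U) j i = 0 := by
    have hrow (k : n) : (ρ * V)ᴴ j k = 0 := by
      rw [Matrix.conjTranspose_apply, star_eq_zero]
      exact congrFun hcol k
    simp only [Matrix.mul_apply (M := (ρ * V)ᴴ), hrow, zero_mul, Finset.sum_const_zero]
  rw [hdiag, Matrix.mul_diagonal] at hentry
  rcases mul_eq_zero.1 hentry with h | h
  · rw [eigenOverlap, h, map_zero, zero_mul]
  · rw [Complex.ofReal_eq_zero.1 h, mul_zero]

end DoubleCalculus

section Scalar

variable {m m' : Type*} [Fintype m] [Fintype m']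

lemma hasDerivAt_sum_mul_log_segment (w p q : m → ℝ) (hp : ∀ i, 0 ≤ p i) (hq : ∀ i, 0 ≤ q i)
    {s : ℝ} (hs : s ∈ Set.Ioo (0 : ℝ) 1) :
    HasDerivAt (fun s => ∑ i, w i * p i * Real.log ((1 - s) * q i + s * p i))
      ((∑ i, w i * (p i ^ 2 / ((1 - s) * q i + s * p i)) - ∑ i, w i * p i) / (1 - s)) s := by
  have h1s : 0 < 1 - s := sub_pos.2 hs.2
  rw [← Finset.sum_sub_distrib, Finset.sum_div]
  refine HasDerivAt.fun_sum fun i _ => ?_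
  rcases (hp i).eq_or_lt with hpi | hpi
  · simpa [← hpi] using hasDerivAt_const s (0 : ℝ)
  have hpos : 0 < (1 - s) * q i + s * p i :=
    add_pos_of_nonneg_of_pos (mul_nonneg h1s.le (hq i)) (mul_pos hs.1 hpi)
  have hsegment : HasDerivAt (fun s => (1 - s) * q i + s * p i) (p i - q i) s := by
    refine ((((hasDerivAt_id s).const_sub 1).mul_const (q i)).add
      ((hasDerivAt_id s).mul_const (p i))).congr_deriv ?_
    ring
  refine ((hsegment.log hpos.ne').const_mul (w i * p i)).congr_deriv ?_
  calc w i * p i * ((p i - q i) / ((1 - s) * q i + s * p i))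
      = w i * p i * ((p i - ((1 - s) * q i + s * p i)) / ((1 - s) * q i + s * p i)) / (1 - s) := by
        rw [eq_div_iff h1s.ne']
        ring
    _ = (w i * (p i ^ 2 / ((1 - s) * q i + s * p i)) - w i * p i) / (1 - s) := by
        rw [sub_div, div_self hpos.ne']
        ring

lemma continuousOn_sum_mul_log_segment (w p q : m → ℝ) (hp : ∀ i, 0 ≤ p i) (hq : ∀ i, 0 ≤ q i)
    (hsupp : ∀ i, q i = 0 → w i * p i = 0) :
    ContinuousOn (fun s => ∑ i, w i * p i * Real.log ((1 - s) * q i + s * p i))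
      (Set.Icc 0 1) := by
  refine continuousOn_finsetSum _ fun i _ => ?_
  by_cases hwp : w i * p i = 0
  · simpa only [hwp, zero_mul] using continuousOn_const
  have hqi : 0 < q i := (hq i).lt_of_ne' fun h => hwp (hsupp i h)
  have hpi : 0 < p i := (hp i).lt_of_ne' fun h => hwp (by rw [h, mul_zero])
  refine continuousOn_const.mul (ContinuousOn.log (by fun_prop) fun s hs => ?_)
  rcases hs.1.eq_or_lt with hs0 | hs0
  · simpa [← hs0] using hqi.ne'
  · exact ne_of_gt (add_pos_of_nonneg_of_pos (mul_nonneg (sub_nonneg.2 hs.2) hqi.le)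
      (mul_pos hs0 hpi))

/- `p (log p - log q)` is the increment over `[0, 1]` of `s ↦ p log ((1 - s) q + s p)`, whose
derivative is `(p ^ 2 / ((1 - s) q + s p) - p) / (1 - s)`. -/
lemma sum_mul_log_sub_log_le_of_sum_sq_div_le {w p q : m → ℝ} {w' p' q' : m' → ℝ}
    (hp : ∀ i, 0 ≤ p i) (hq : ∀ i, 0 ≤ q i) (hsupp : ∀ i, q i = 0 → w i * p i = 0)
    (hp' : ∀ i, 0 ≤ p' i) (hq' : ∀ i, 0 ≤ q' i) (hsupp' : ∀ i, q' i = 0 → w' i * p' i = 0)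
    (hmass : ∑ i, w' i * p' i = ∑ i, w i * p i)
    (hle : ∀ s ∈ Set.Ioo (0 : ℝ) 1, ∑ i, w' i * (p' i ^ 2 / ((1 - s) * q' i + s * p' i)) ≤
      ∑ i, w i * (p i ^ 2 / ((1 - s) * q i + s * p i))) :
    ∑ i, w' i * p' i * (Real.log (p' i) - Real.log (q' i)) ≤
      ∑ i, w i * p i * (Real.log (p i) - Real.log (q i)) := by
  have hint : interior (Set.Icc (0 : ℝ) 1) = Set.Ioo 0 1 := interior_Icc
  have hderiv := fun s hs => (hasDerivAt_sum_mul_log_segment w p q hp hq (s := s) hs).sub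
    (hasDerivAt_sum_mul_log_segment w' p' q' hp' hq' hs)
  have hmono := monotoneOn_of_deriv_nonneg (convex_Icc (0 : ℝ) 1)
    ((continuousOn_sum_mul_log_segment w p q hp hq hsupp).sub
      (continuousOn_sum_mul_log_segment w' p' q' hp' hq' hsupp'))
    (fun s hs => (hderiv s (hint ▸ hs)).differentiableAt.differentiableWithinAt)
    (fun s hs => by
      rw [hint] at hs
      rw [(hderiv s hs).deriv, ← sub_div, hmass]
      exact div_nonneg (by linarith [hle s hs]) (sub_nonneg.2 hs.2.le))
  have hends := hmono (Set.left_mem_Icc.2 zero_le_one) (Set.right_mem_Icc.2 zero_le_one) zero_le_one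
  simp only [Pi.sub_apply, sub_zero, sub_self, one_mul, zero_mul, add_zero, zero_add] at hends
  simp only [mul_sub, Finset.sum_sub_distrib]
  linarith

end Scalar

section Sylvester

variable {n : Type*} [Fintype n]

lemma re_trace_conjTranspose_mul_comm (X Y : Matrix n n ℂ) :
    (Xᴴ * Y).trace.re = (Yᴴ * X).trace.re := by
  rw [← Complex.conj_re, ← Complex.star_def, ← Matrix.trace_conjTranspose,
    Matrix.conjTranspose_mul, Matrix.conjTranspose_conjTranspose]

lemma re_trace_sylvester_nonneg {A B : Matrix n n ℂ} (hA : A.PosSemidef) (hB : B.PosSemidef)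
    (Y : Matrix n n ℂ) : 0 ≤ (Yᴴ * (A * Y + Y * B)).trace.re := by
  have hAY := (hA.conjTranspose_mul_mul_same Y).trace_nonneg
  have hYB := (hB.mul_mul_conjTranspose_same Y).trace_nonneg
  rw [Matrix.mul_assoc] at hAY
  rw [Matrix.trace_mul_comm] at hYB
  rw [Matrix.mul_add, Matrix.trace_add]
  exact (Complex.le_def.1 (add_nonneg hAY hYB)).1

lemma re_trace_sylvester_comm {A B : Matrix n n ℂ} (hA : A.IsHermitian) (hB : B.IsHermitian)
    (X Y : Matrix n n ℂ) :
    (Xᴴ * (A * Y + Y * B)).trace.re = (Yᴴ * (A * X + X * B)).trace.re := by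
  rw [re_trace_conjTranspose_mul_comm, Matrix.conjTranspose_add, Matrix.conjTranspose_mul,
    Matrix.conjTranspose_mul, hA.eq, hB.eq, Matrix.add_mul, Matrix.mul_add, Matrix.trace_add,
    Matrix.trace_add, Matrix.mul_assoc, Matrix.mul_assoc B, Matrix.trace_mul_comm B,
    Matrix.mul_assoc]

/- Completing the square: the difference of the two sides is the nonnegative form
`Re tr (Yᴴ (A Y + Y B))` at `Y = W - W₀`. -/
lemma sylvester_variational {A B C W₀ : Matrix n n ℂ} (hA : A.PosSemidef) (hB : B.PosSemidef)
    (hW₀ : A * W₀ + W₀ * B = C) (W : Matrix n n ℂ) :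
    2 * (Cᴴ * W).trace.re - (Wᴴ * (A * W + W * B)).trace.re ≤ (Cᴴ * W₀).trace.re := by
  have hsq := re_trace_sylvester_nonneg hA hB (W - W₀)
  have hcross := re_trace_sylvester_comm hA.1 hB.1 W₀ W
  have hexpand : (W - W₀)ᴴ * (A * (W - W₀) + (W - W₀) * B) =
      Wᴴ * (A * W + W * B) - W₀ᴴ * (A * W + W * B) - Wᴴ * C + W₀ᴴ * C := by
    rw [← hW₀, Matrix.conjTranspose_sub]
    noncomm_ring
  rw [hW₀] at hcross
  simp only [hexpand, Matrix.trace_add, Matrix.trace_sub, Complex.add_re, Complex.sub_re, hcross,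
    re_trace_conjTranspose_mul_comm _ C] at hsq
  linarith

end Sylvester

section SegmentResolvent

variable {n : Type*} [Fintype n] [DecidableEq n] {ρ σ : Matrix n n ℂ}

/-- The solution `W` of the Sylvester equation `(1 - s) σ W + s W ρ = ρ`. -/
def segmentResolvent (hσ : σ.IsHermitian) (hρ : ρ.IsHermitian) (s : ℝ) : Matrix n n ℂ :=
  doubleCFC hσ hρ fun q p => p / ((1 - s) * q + s * p)

lemma smul_mul_segmentResolvent_add (hσ : σ.PosSemidef) (hρ : ρ.PosSemidef) {s : ℝ}
    (hs : s ∈ Set.Ioo (0 : ℝ) 1) :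
    ((1 - s) • σ) * segmentResolvent hσ.1 hρ.1 s +
      segmentResolvent hσ.1 hρ.1 s * (s • ρ) = ρ := by
  have hscaled : (1 - s) • σ = cfc (fun x : ℝ => (1 - s) * x) σ :=
    (cfc_const_mul_id (1 - s) σ hσ.1.isSelfAdjoint).symm
  have hscaled' : s • ρ = cfc (fun x : ℝ => s * x) ρ :=
    (cfc_const_mul_id s ρ hρ.1.isSelfAdjoint).symm
  rw [hscaled, hscaled', segmentResolvent, cfc_mul_doubleCFC, doubleCFC_mul_cfc, doubleCFC_add]
  calc _ = doubleCFC hσ.1 hρ.1 (fun _ p => 1 * p) := doubleCFC_congr _ _ fun j i => by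
        rcases (hρ.eigenvalues_nonneg i).eq_or_lt with hpi | hpi
        · simp [← hpi]
        have hpos : 0 < (1 - s) * hσ.1.eigenvalues j + s * hρ.1.eigenvalues i :=
          add_pos_of_nonneg_of_pos
            (mul_nonneg (sub_nonneg.2 hs.2.le) (hσ.eigenvalues_nonneg j)) (mul_pos hs.1 hpi)
        field_simp
    _ = cfc (fun _ : ℝ => (1 : ℝ)) σ * cfc id ρ :=
        (cfc_mul_cfc_eq_doubleCFC hσ.1 hρ.1 (fun _ => 1) id).symm
    _ = ρ := by
        rw [cfc_const_one ℝ σ hσ.1.isSelfAdjoint, cfc_id ℝ ρ hρ.1.isSelfAdjoint, Matrix.one_mul]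

lemma re_trace_mul_segmentResolvent (hσ : σ.IsHermitian) (hρ : ρ.IsHermitian) (s : ℝ) :
    (ρ * segmentResolvent hσ hρ s).trace.re = ∑ j, ∑ i, eigenOverlap hσ hρ j i *
      (hρ.eigenvalues i ^ 2 / ((1 - s) * hσ.eigenvalues j + s * hρ.eigenvalues i)) := by
  have h := doubleCFC_mul_cfc hσ hρ id fun q p => p / ((1 - s) * q + s * p)
  rw [cfc_id ℝ ρ hρ.isSelfAdjoint] at h
  rw [Matrix.trace_mul_comm, segmentResolvent, h, re_trace_doubleCFC]
  simp only [id_eq, div_mul_eq_mul_div, sq]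

end SegmentResolvent

section Dephasing

variable {a b : Type*} [DecidableEq a]

lemma dephaseA_apply (M : Matrix (a × b) (a × b) ℂ) (p q : a × b) :
    dephaseA M p q = if p.1 = q.1 then M p q else 0 :=
  rfl

lemma dephaseA_dephaseA (M : Matrix (a × b) (a × b) ℂ) : dephaseA (dephaseA M) = dephaseA M := by
  ext p q
  simp only [dephaseA_apply]
  split_ifs <;> rfl

lemma dephaseA_smul (s : ℝ) (M : Matrix (a × b) (a × b) ℂ) :
    dephaseA (s • M) = s • dephaseA M := by
  ext p q
  simp only [dephaseA_apply, Matrix.smul_apply, smul_ite, smul_zero]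

lemma dephaseA_add (M N : Matrix (a × b) (a × b) ℂ) :
    dephaseA (M + N) = dephaseA M + dephaseA N := by
  ext p q
  simp only [dephaseA_apply, Matrix.add_apply]
  split_ifs <;> simp only [add_zero]

lemma conjTranspose_dephaseA (M : Matrix (a × b) (a × b) ℂ) :
    (dephaseA M)ᴴ = dephaseA Mᴴ := by
  ext p q
  simp only [Matrix.conjTranspose_apply, dephaseA_apply, eq_comm (a := q.1), apply_ite star,
    star_zero]

/-- The projection `|k⟩⟨k| ⊗ 1` onto a block of the first factor. -/
def blockProj [DecidableEq b] (k : a) : Matrix (a × b) (a × b) ℂ :=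
  Matrix.diagonal fun p => if p.1 = k then 1 else 0

lemma conjTranspose_blockProj [DecidableEq b] (k : a) :
    (blockProj k : Matrix (a × b) (a × b) ℂ)ᴴ = blockProj k := by
  rw [blockProj, Matrix.diagonal_conjTranspose]
  congr 1
  ext p
  simp only [Pi.star_apply, apply_ite star, star_one, star_zero]

lemma sum_blockProj [Fintype a] [DecidableEq b] :
    ∑ k, (blockProj k : Matrix (a × b) (a × b) ℂ) = 1 := by
  ext p q
  simp [blockProj, Matrix.sum_apply, Matrix.diagonal_apply, Matrix.one_apply]

section Multiplication

variable [Fintype a] [Fintype b]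

lemma trace_dephaseA (M : Matrix (a × b) (a × b) ℂ) : (dephaseA M).trace = M.trace := by
  simp only [Matrix.trace, Matrix.diag_apply, dephaseA_apply, if_true]

lemma dephaseA_mul_of_dephaseA_eq_left {X : Matrix (a × b) (a × b) ℂ} (hX : dephaseA X = X)
    (Y : Matrix (a × b) (a × b) ℂ) : dephaseA (X * Y) = X * dephaseA Y := by
  ext p q
  simp only [dephaseA_apply, Matrix.mul_apply]
  rw [← hX, Finset.ite_sum_zero]
  refine Finset.sum_congr rfl fun r _ => ?_
  by_cases hpr : p.1 = r.1
  · simp only [hpr, mul_ite, mul_zero]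
  · simp [dephaseA_apply, hpr]

lemma dephaseA_mul_of_dephaseA_eq_right (X : Matrix (a × b) (a × b) ℂ)
    {Y : Matrix (a × b) (a × b) ℂ} (hY : dephaseA Y = Y) :
    dephaseA (X * Y) = dephaseA X * Y := by
  have hYstar : dephaseA Yᴴ = Yᴴ := by rw [← conjTranspose_dephaseA, hY]
  rw [← Matrix.conjTranspose_inj, conjTranspose_dephaseA, Matrix.conjTranspose_mul,
    dephaseA_mul_of_dephaseA_eq_left hYstar, Matrix.conjTranspose_mul, conjTranspose_dephaseA]

lemma trace_mul_dephaseA_of_dephaseA_eq {X : Matrix (a × b) (a × b) ℂ} (hX : dephaseA X = X)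
    (Y : Matrix (a × b) (a × b) ℂ) : (X * dephaseA Y).trace = (X * Y).trace := by
  rw [← dephaseA_mul_of_dephaseA_eq_left hX, trace_dephaseA]

end Multiplication

section Blocks

variable [Fintype a] [Fintype b] [DecidableEq b]

lemma blockProj_mul_mul_blockProj_apply (M : Matrix (a × b) (a × b) ℂ) (k : a) (p q : a × b) :
    (blockProj k * M * blockProj k : Matrix (a × b) (a × b) ℂ) p q =
      if p.1 = k then if q.1 = k then M p q else 0 else 0 := by
  simp only [blockProj, Matrix.mul_diagonal, Matrix.diagonal_mul, ite_mul, one_mul, zero_mul,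
    mul_ite, mul_one, mul_zero]
  split_ifs <;> rfl

lemma dephaseA_eq_sum_blockProj (M : Matrix (a × b) (a × b) ℂ) :
    dephaseA M = ∑ k, blockProj k * M * blockProj k := by
  ext p q
  simp only [Matrix.sum_apply, blockProj_mul_mul_blockProj_apply, dephaseA_apply,
    Finset.sum_ite_eq, Finset.mem_univ, if_true, eq_comm (a := q.1)]

lemma dephaseA_eq_self_iff {M : Matrix (a × b) (a × b) ℂ} :
    dephaseA M = M ↔ ∀ k, Commute (blockProj k) M := by
  have hentry (k : a) (p q : a × b) :
      (blockProj k * M : Matrix (a × b) (a × b) ℂ) p q =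
        (M * blockProj k : Matrix (a × b) (a × b) ℂ) p q ↔
      (if p.1 = k then M p q else 0) = if q.1 = k then M p q else 0 := by
    simp only [blockProj, Matrix.diagonal_mul, Matrix.mul_diagonal, ite_mul, one_mul, zero_mul,
      mul_ite, mul_one, mul_zero]
  constructor
  · intro hM k
    ext p q
    rw [hentry, ← hM, dephaseA_apply]
    by_cases hpq : p.1 = q.1
    · simp only [hpq]
    · simp only [if_neg hpq, ite_self]
  · intro hM
    ext p q
    exact ((hentry q.1 p q).1 (congrFun₂ (hM q.1) p q)).trans (if_pos rfl)

lemma dephaseA_cfc_of_dephaseA_eq {M : Matrix (a × b) (a × b) ℂ} (hM : dephaseA M = M)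
    (f : ℝ → ℝ) : dephaseA (cfc f M) = cfc f M :=
  dephaseA_eq_self_iff.2 fun k => ((dephaseA_eq_self_iff.1 hM k).symm.cfc_real f).symm

lemma dephaseA_mulVec_eq_zero_iff {M : Matrix (a × b) (a × b) ℂ} (hM : M.PosSemidef)
    (x : a × b → ℂ) :
    dephaseA M *ᵥ x = 0 ↔ ∀ k, M *ᵥ (blockProj k *ᵥ x) = 0 := by
  constructor
  · intro hx k
    have hform : ∑ k, star (blockProj k *ᵥ x) ⬝ᵥ (M *ᵥ (blockProj k *ᵥ x)) = 0 := by
      rw [← dotProduct_zero (star x), ← hx, dephaseA_eq_sum_blockProj, Matrix.sum_mulVec,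
        dotProduct_sum]
      refine Finset.sum_congr rfl fun k _ => ?_
      rw [Matrix.star_mulVec, conjTranspose_blockProj, ← Matrix.dotProduct_mulVec,
        Matrix.mulVec_mulVec, Matrix.mulVec_mulVec, Matrix.mul_assoc]
    exact (hM.dotProduct_mulVec_zero_iff _).1 <|
      (Finset.sum_eq_zero_iff_of_nonneg fun k _ => hM.dotProduct_mulVec_nonneg _).1 hform k
        (Finset.mem_univ k)
  · intro hx
    rw [dephaseA_eq_sum_blockProj, Matrix.sum_mulVec]
    refine Finset.sum_eq_zero fun k _ => ?_
    rw [← Matrix.mulVec_mulVec, ← Matrix.mulVec_mulVec, hx, Matrix.mulVec_zero]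

end Blocks

lemma posSemidef_dephaseA [Finite a] [Finite b] {M : Matrix (a × b) (a × b) ℂ}
    (hM : M.PosSemidef) : (dephaseA M).PosSemidef := by
  classical
  cases nonempty_fintype a
  cases nonempty_fintype b
  rw [dephaseA_eq_sum_blockProj]
  refine Matrix.posSemidef_sum _ fun k _ => ?_
  simpa only [conjTranspose_blockProj] using hM.mul_mul_conjTranspose_same (blockProj k)

variable [Fintype a] [Fintype b]

lemma mulVec_eq_zero_of_dephaseA_mulVec_eq_zero {M : Matrix (a × b) (a × b) ℂ}
    (hM : M.PosSemidef) {x : a × b → ℂ} (hx : dephaseA M *ᵥ x = 0) : M *ᵥ x = 0 := by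
  classical
  rw [← Matrix.one_mulVec x, ← sum_blockProj, Matrix.sum_mulVec, Matrix.mulVec_sum]
  exact Finset.sum_eq_zero fun k _ => (dephaseA_mulVec_eq_zero_iff hM x).1 hx k

lemma dephaseA_mulVec_eq_zero_of_ker_le {M N : Matrix (a × b) (a × b) ℂ} (hM : M.PosSemidef)
    (hN : N.PosSemidef) (hker : ∀ x, M *ᵥ x = 0 → N *ᵥ x = 0) {x : a × b → ℂ}
    (hx : dephaseA M *ᵥ x = 0) : dephaseA N *ᵥ x = 0 := by
  classical
  exact (dephaseA_mulVec_eq_zero_iff hN x).2 fun k =>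
    hker _ ((dephaseA_mulVec_eq_zero_iff hM x).1 hx k)

/- The dephased solution is a trial point of the variational principle for the original equation. -/
lemma re_trace_sylvester_dephaseA_le {A B C W W' : Matrix (a × b) (a × b) ℂ}
    (hA : A.PosSemidef) (hB : B.PosSemidef) (hW : A * W + W * B = C)
    (hW' : dephaseA A * W' + W' * dephaseA B = dephaseA C) :
    ((dephaseA C)ᴴ * W').trace.re ≤ (Cᴴ * W).trace.re := by
  set V := dephaseA W' with hVdef
  have hV : dephaseA V = V := dephaseA_dephaseA W'
  have hVstar : dephaseA Vᴴ = Vᴴ := by rw [← conjTranspose_dephaseA, hV]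
  have hVeq : dephaseA A * V + V * dephaseA B = dephaseA C := by
    rw [hVdef, ← dephaseA_mul_of_dephaseA_eq_left (dephaseA_dephaseA A),
      ← dephaseA_mul_of_dephaseA_eq_right _ (dephaseA_dephaseA B), ← dephaseA_add, hW',
      dephaseA_dephaseA]
  have hlin : ((dephaseA C)ᴴ * W').trace = (Cᴴ * V).trace := by
    rw [← trace_mul_dephaseA_of_dephaseA_eq (by rw [conjTranspose_dephaseA, dephaseA_dephaseA]),
      ← hVdef, conjTranspose_dephaseA, ← dephaseA_mul_of_dephaseA_eq_right _ hV, trace_dephaseA]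
  have hquad : (Vᴴ * (A * V + V * B)).trace.re = (Cᴴ * V).trace.re := by
    rw [← trace_mul_dephaseA_of_dephaseA_eq hVstar, dephaseA_add,
      dephaseA_mul_of_dephaseA_eq_right _ hV, dephaseA_mul_of_dephaseA_eq_left hV, hVeq,
      trace_mul_dephaseA_of_dephaseA_eq hVstar, re_trace_conjTranspose_mul_comm]
  rw [hlin]
  linarith [sylvester_variational hA hB hW V]

end Dephasing

section Entropy

variable {n : Type*} [Fintype n] [DecidableEq n] {ρ σ : Matrix n n ℂ}

lemma mlog_eq_cfc (M : Matrix n n ℂ) : mlog M = cfc (Real.logb 2) M := by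
  by_cases hM : M.IsHermitian
  · rw [mlog, dif_pos hM, cfc_eq_mul_diagonal_mul hM]
  · rw [mlog, dif_neg hM]
    exact (cfc_apply_of_not_predicate M hM).symm

lemma mul_cfc_eq_cfc (hρ : ρ.IsHermitian) (f : ℝ → ℝ) :
    ρ * cfc f ρ = cfc (fun x => x * f x) ρ := by
  rw [cfc_mul (fun x => x) f ρ continuousOn_id (ρ.finite_real_spectrum.continuousOn f),
    cfc_id' ℝ ρ hρ.isSelfAdjoint]

lemma re_trace_cfc (hρ : ρ.IsHermitian) (f : ℝ → ℝ) :
    (cfc f ρ).trace.re = ∑ i, f (hρ.eigenvalues i) := by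
  rw [cfc_eq_mul_diagonal_mul hρ, Matrix.mul_assoc, Matrix.trace_mul_comm, Matrix.mul_assoc,
    conjTranspose_mul_self_eigenvectorUnitary, Matrix.mul_one, Matrix.trace_diagonal,
    ← Complex.ofReal_sum, Complex.ofReal_re]

lemma vN_eq_neg_re_trace_mul_mlog (hρ : ρ.IsHermitian) : vN ρ = -(ρ * mlog ρ).trace.re := by
  rw [vN, dif_pos hρ, mlog_eq_cfc, mul_cfc_eq_cfc hρ, re_trace_cfc hρ, Finset.sum_neg_distrib]

lemma re_trace_mul_mlog_smul (hρ : ρ.IsHermitian) {c : ℝ} (hc : c ≠ 0) :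
    (ρ * mlog (c • ρ)).trace.re = ρ.trace.re * Real.logb 2 c - vN ρ := by
  have hmlog : mlog (c • ρ) = cfc (fun x => Real.logb 2 (c * x)) ρ := by
    rw [mlog_eq_cfc]
    exact (cfc_comp_smul c (Real.logb 2) ρ
      ((ρ.finite_real_spectrum.image _).continuousOn _) hρ.isSelfAdjoint).symm
  have htrace : ρ.trace.re = ∑ i, hρ.eigenvalues i := by
    simpa only [cfc_id ℝ ρ hρ.isSelfAdjoint, id_eq] using re_trace_cfc hρ id
  rw [hmlog, mul_cfc_eq_cfc hρ, re_trace_cfc hρ, htrace, vN, dif_pos hρ, Finset.sum_mul,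
    ← Finset.sum_sub_distrib]
  refine Finset.sum_congr rfl fun i _ => ?_
  by_cases hi : hρ.eigenvalues i = 0
  · simp only [hi, zero_mul, neg_zero, sub_zero]
  · rw [Real.logb_mul hc hi]
    ring

lemma relEnt_eq_neg_vN_sub (hρ : ρ.IsHermitian) (σ : Matrix n n ℂ) :
    relEnt ρ σ = -vN ρ - (ρ * mlog σ).trace.re := by
  rw [relEnt, vN_eq_neg_re_trace_mul_mlog hρ, Matrix.mul_sub, Matrix.trace_sub, Complex.sub_re,
    neg_neg]

lemma relEnt_eq_sum_eigenOverlap (hσ : σ.IsHermitian) (hρ : ρ.IsHermitian) :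
    relEnt ρ σ = (∑ j, ∑ i, eigenOverlap hσ hρ j i * hρ.eigenvalues i *
      (Real.log (hρ.eigenvalues i) - Real.log (hσ.eigenvalues j))) / Real.log 2 := by
  have hρlog := re_trace_cfc_mul_cfc hσ hρ (fun _ => 1) fun x => x * Real.logb 2 x
  have hσlog := re_trace_cfc_mul_cfc hσ hρ (Real.logb 2) id
  rw [cfc_const_one ℝ σ hσ.isSelfAdjoint, Matrix.one_mul, ← mul_cfc_eq_cfc hρ,
    ← mlog_eq_cfc] at hρlog
  rw [cfc_id ℝ ρ hρ.isSelfAdjoint, ← mlog_eq_cfc, Matrix.trace_mul_comm] at hσlog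
  rw [relEnt, Matrix.mul_sub, Matrix.trace_sub, Complex.sub_re, hρlog, hσlog]
  simp only [← Finset.sum_sub_distrib, Finset.sum_div, Real.logb, id_eq]
  refine Finset.sum_congr rfl fun j _ => Finset.sum_congr rfl fun i _ => ?_
  ring

variable {m : Type*} [Fintype m] [DecidableEq m]

lemma mlog_map (φ : Matrix m m ℂ →⋆ₐ[ℂ] Matrix n n ℂ) {M : Matrix m m ℂ} (hM : M.IsHermitian) :
    mlog (φ M) = φ (mlog M) := by
  rw [mlog_eq_cfc, mlog_eq_cfc]
  exact (φ.map_cfc (Real.logb 2) M (M.finite_real_spectrum.continuousOn _)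
    (LinearMap.continuous_of_finiteDimensional φ.toLinearMap) hM.isSelfAdjoint
    (hM.isSelfAdjoint.map φ)).symm

lemma mlog_conj {K : Matrix n n ℂ} (hK : K ∈ Matrix.unitaryGroup n ℂ) (hρ : ρ.IsHermitian) :
    mlog (K * ρ * Kᴴ) = K * mlog ρ * Kᴴ :=
  mlog_map (Unitary.conjStarAlgAut ℂ (Matrix n n ℂ) ⟨K, hK⟩ : Matrix n n ℂ →⋆ₐ[ℂ] Matrix n n ℂ) hρ

lemma trace_conj_mul_conj {K : Matrix n n ℂ} (hK : K ∈ Matrix.unitaryGroup n ℂ)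
    (X Y : Matrix n n ℂ) : ((K * X * Kᴴ) * (K * Y * Kᴴ)).trace = (X * Y).trace := by
  have hKK : Kᴴ * K = 1 := Unitary.star_mul_self_of_mem hK
  calc ((K * X * Kᴴ) * (K * Y * Kᴴ)).trace = (K * (X * (Kᴴ * K) * (Y * Kᴴ))).trace := by
        simp only [Matrix.mul_assoc]
    _ = (X * Y).trace := by
        rw [hKK, Matrix.mul_one, Matrix.trace_mul_comm, Matrix.mul_assoc, Matrix.mul_assoc, hKK,
          Matrix.mul_one]

lemma vN_conj {K : Matrix n n ℂ} (hK : K ∈ Matrix.unitaryGroup n ℂ) (hρ : ρ.IsHermitian) :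
    vN (K * ρ * Kᴴ) = vN ρ := by
  rw [vN_eq_neg_re_trace_mul_mlog hρ,
    vN_eq_neg_re_trace_mul_mlog (Matrix.isHermitian_mul_mul_conjTranspose K hρ),
    mlog_conj hK hρ, trace_conj_mul_conj hK]

lemma relEnt_conj {K : Matrix n n ℂ} (hK : K ∈ Matrix.unitaryGroup n ℂ) (hρ : ρ.IsHermitian)
    (hσ : σ.IsHermitian) : relEnt (K * ρ * Kᴴ) (K * σ * Kᴴ) = relEnt ρ σ := by
  rw [relEnt, relEnt, mlog_conj hK hρ, mlog_conj hK hσ, ← Matrix.sub_mul, ← Matrix.mul_sub,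
    trace_conj_mul_conj hK]

end Entropy

section DataProcessing

lemma relEnt_le_of_re_trace_segmentResolvent_le {m n : Type*} [Fintype m] [DecidableEq m]
    [Fintype n] [DecidableEq n] {ρ' σ' : Matrix m m ℂ} {ρ σ : Matrix n n ℂ}
    (hρ' : ρ'.PosSemidef) (hσ' : σ'.PosSemidef) (hρ : ρ.PosSemidef) (hσ : σ.PosSemidef)
    (hker' : ∀ x, σ' *ᵥ x = 0 → ρ' *ᵥ x = 0) (hker : ∀ x, σ *ᵥ x = 0 → ρ *ᵥ x = 0)
    (htrace : ρ'.trace.re = ρ.trace.re)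
    (hle : ∀ s ∈ Set.Ioo (0 : ℝ) 1, (ρ' * segmentResolvent hσ'.1 hρ'.1 s).trace.re ≤
      (ρ * segmentResolvent hσ.1 hρ.1 s).trace.re) :
    relEnt ρ' σ' ≤ relEnt ρ σ := by
  have hsum := sum_mul_log_sub_log_le_of_sum_sq_div_le
    (w := fun x : n × n => eigenOverlap hσ.1 hρ.1 x.1 x.2) (p := fun x => hρ.1.eigenvalues x.2)
    (q := fun x => hσ.1.eigenvalues x.1)
    (w' := fun x : m × m => eigenOverlap hσ'.1 hρ'.1 x.1 x.2)
    (p' := fun x => hρ'.1.eigenvalues x.2) (q' := fun x => hσ'.1.eigenvalues x.1)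
    (fun x => hρ.eigenvalues_nonneg x.2) (fun x => hσ.eigenvalues_nonneg x.1)
    (fun x hx => eigenOverlap_mul_eigenvalues_eq_zero hσ.1 hρ.1 hker hx x.2)
    (fun x => hρ'.eigenvalues_nonneg x.2) (fun x => hσ'.eigenvalues_nonneg x.1)
    (fun x hx => eigenOverlap_mul_eigenvalues_eq_zero hσ'.1 hρ'.1 hker' hx x.2)
  simp only [Fintype.sum_prod_type, ← re_trace_eq_sum_eigenOverlap,
    ← re_trace_mul_segmentResolvent] at hsum
  rw [relEnt_eq_sum_eigenOverlap hσ.1 hρ.1, relEnt_eq_sum_eigenOverlap hσ'.1 hρ'.1]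
  exact div_le_div_of_nonneg_right (hsum htrace hle) (Real.log_nonneg one_le_two)

lemma mulVec_conj_eq_zero_of_mulVec_conj_eq_zero {n : Type*} [Fintype n] [DecidableEq n]
    {K : Matrix n n ℂ} (hK : K ∈ Matrix.unitaryGroup n ℂ) {ρ σ : Matrix n n ℂ}
    (hker : ∀ x, σ *ᵥ x = 0 → ρ *ᵥ x = 0) {x : n → ℂ} (hx : (K * σ * Kᴴ) *ᵥ x = 0) :
    (K * ρ * Kᴴ) *ᵥ x = 0 := by
  have hKK : Kᴴ * K = 1 := Unitary.star_mul_self_of_mem hK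
  have hσx : σ *ᵥ (Kᴴ *ᵥ x) = 0 := by
    rw [Matrix.mulVec_mulVec, ← Matrix.one_mul (σ * Kᴴ), ← hKK, Matrix.mul_assoc,
      ← Matrix.mulVec_mulVec, ← Matrix.mul_assoc, hx, Matrix.mulVec_zero]
  rw [Matrix.mul_assoc, ← Matrix.mulVec_mulVec, ← Matrix.mulVec_mulVec, hker _ hσx,
    Matrix.mulVec_zero]

variable {a b : Type*} [Fintype a] [DecidableEq a] [Fintype b] [DecidableEq b]
  {ρ σ : Matrix (a × b) (a × b) ℂ}

theorem relEnt_dephaseA_le (hρ : ρ.PosSemidef) (hσ : σ.PosSemidef)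
    (hker : ∀ x, σ *ᵥ x = 0 → ρ *ᵥ x = 0) :
    relEnt (dephaseA ρ) (dephaseA σ) ≤ relEnt ρ σ := by
  have hρ' := posSemidef_dephaseA hρ
  have hσ' := posSemidef_dephaseA hσ
  refine relEnt_le_of_re_trace_segmentResolvent_le hρ' hσ' hρ hσ
    (fun x hx => dephaseA_mulVec_eq_zero_of_ker_le hσ hρ hker hx) hker (by rw [trace_dephaseA])
    fun s hs => ?_
  have hresolvent := smul_mul_segmentResolvent_add hσ' hρ' hs
  rw [← dephaseA_smul, ← dephaseA_smul] at hresolvent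
  have hle := re_trace_sylvester_dephaseA_le (hσ.smul (sub_nonneg.2 hs.2.le))
    (hρ.smul hs.1.le) (smul_mul_segmentResolvent_add hσ hρ hs) hresolvent
  rwa [hρ.1.eq, hρ'.1.eq] at hle

lemma relEnt_dephaseA_self (hρ : ρ.PosSemidef) :
    relEnt ρ (dephaseA ρ) = vN (dephaseA ρ) - vN ρ := by
  have hmlog : dephaseA (mlog (dephaseA ρ)) = mlog (dephaseA ρ) := by
    rw [mlog_eq_cfc]
    exact dephaseA_cfc_of_dephaseA_eq (dephaseA_dephaseA ρ) _
  rw [relEnt_eq_neg_vN_sub hρ.1, vN_eq_neg_re_trace_mul_mlog (posSemidef_dephaseA hρ).1,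
    Matrix.trace_mul_comm ρ, ← trace_mul_dephaseA_of_dephaseA_eq hmlog, Matrix.trace_mul_comm]
  ring

lemma relEnt_dephaseA_conj_dephaseA_le {K : Matrix (a × b) (a × b) ℂ}
    (hK : K ∈ Matrix.unitaryGroup (a × b) ℂ) (hρ : ρ.PosSemidef) :
    relEnt (dephaseA (K * ρ * Kᴴ)) (dephaseA (K * dephaseA ρ * Kᴴ)) ≤
      vN (dephaseA ρ) - vN ρ := by
  have hρ' := posSemidef_dephaseA hρ
  calc relEnt (dephaseA (K * ρ * Kᴴ)) (dephaseA (K * dephaseA ρ * Kᴴ))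
      ≤ relEnt (K * ρ * Kᴴ) (K * dephaseA ρ * Kᴴ) :=
        relEnt_dephaseA_le (hρ.mul_mul_conjTranspose_same K) (hρ'.mul_mul_conjTranspose_same K)
          fun _ => mulVec_conj_eq_zero_of_mulVec_conj_eq_zero hK fun _ =>
            mulVec_eq_zero_of_dephaseA_mulVec_eq_zero hρ
    _ = vN (dephaseA ρ) - vN ρ := by rw [relEnt_conj hK hρ.1 hρ'.1, relEnt_dephaseA_self hρ]

end DataProcessing

section ReducedState

variable {a b : Type*} [Fintype a]

lemma r2B_dephaseA [DecidableEq a] (M : Matrix (a × b) (a × b) ℂ) : r2B (dephaseA M) = r2B M := by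
  simp only [r2B, dephaseA_apply, if_true]

lemma posSemidef_r2B {M : Matrix (a × b) (a × b) ℂ} (hM : M.PosSemidef) :
    (r2B M).PosSemidef := by
  have hsum : r2B M = ∑ k, M.submatrix (fun y => (k, y)) (fun y => (k, y)) := by
    ext y y'
    rw [Matrix.sum_apply]
    rfl
  rw [hsum]
  exact Matrix.posSemidef_sum _ fun k _ => hM.submatrix _

variable [Fintype b]

lemma trace_r2B (M : Matrix (a × b) (a × b) ℂ) : (r2B M).trace = M.trace := by
  rw [Matrix.trace, Matrix.trace, Fintype.sum_prod_type]
  exact Finset.sum_comm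

variable [DecidableEq a]

lemma trace_mul_one_kronecker (M : Matrix (a × b) (a × b) ℂ) (G : Matrix b b ℂ) :
    (M * ((1 : Matrix a a ℂ) ⊗ₖ G)).trace = (r2B M * G).trace := by
  have hentry (x : a) (y : b) :
      (M * ((1 : Matrix a a ℂ) ⊗ₖ G)) (x, y) (x, y) = ∑ z, M (x, y) (x, z) * G z y := by
    simp [Matrix.mul_apply, Fintype.sum_prod_type, Matrix.one_apply]
  simp only [Matrix.trace, Matrix.diag_apply, Fintype.sum_prod_type, hentry]
  simp only [Matrix.mul_apply, r2B, Matrix.of_apply, Finset.sum_mul]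
  rw [Finset.sum_comm]
  exact Finset.sum_congr rfl fun y _ => Finset.sum_comm

variable [DecidableEq b]

lemma r2B_conj_kronecker_one {F : Matrix a a ℂ} (hF : F ∈ Matrix.unitaryGroup a ℂ)
    (M : Matrix (a × b) (a × b) ℂ) :
    r2B ((F ⊗ₖ (1 : Matrix b b ℂ)) * M * (F ⊗ₖ (1 : Matrix b b ℂ))ᴴ) = r2B M := by
  set K := F ⊗ₖ (1 : Matrix b b ℂ) with hK
  have hcomm (G : Matrix b b ℂ) : Kᴴ * ((1 : Matrix a a ℂ) ⊗ₖ G) * K = 1 ⊗ₖ G := by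
    have hFF : Fᴴ * F = 1 := Unitary.star_mul_self_of_mem hF
    rw [hK, Matrix.conjTranspose_kronecker, Matrix.conjTranspose_one, ← Matrix.mul_kronecker_mul,
      ← Matrix.mul_kronecker_mul, Matrix.mul_one, Matrix.mul_one, Matrix.one_mul, hFF]
  refine Matrix.ext_iff_trace_mul_right.2 fun G => ?_
  rw [← trace_mul_one_kronecker, ← trace_mul_one_kronecker, Matrix.mul_assoc, Matrix.mul_assoc,
    Matrix.trace_mul_comm, Matrix.mul_assoc, hcomm]

/-- The ampliation `G ↦ 1 ⊗ G`. -/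
def oneKronecker (a b : Type*) [Fintype a] [DecidableEq a] [Fintype b] [DecidableEq b] :
    Matrix b b ℂ →⋆ₐ[ℂ] Matrix (a × b) (a × b) ℂ where
  toFun G := 1 ⊗ₖ G
  map_one' := Matrix.one_kronecker_one
  map_mul' G H := by rw [← Matrix.mul_kronecker_mul, Matrix.one_mul]
  map_zero' := Matrix.kronecker_zero _
  map_add' := Matrix.kronecker_add _
  commutes' c := by
    rw [Algebra.algebraMap_eq_smul_one, Algebra.algebraMap_eq_smul_one, Matrix.kronecker_smul,
      Matrix.one_kronecker_one]
  map_star' G := by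
    rw [Matrix.star_eq_conjTranspose, Matrix.star_eq_conjTranspose, Matrix.conjTranspose_kronecker,
      Matrix.conjTranspose_one]

lemma relEnt_smul_one_kronecker_r2B {τ : Matrix (a × b) (a × b) ℂ} (hτ : τ.PosSemidef) {c : ℝ}
    (hc : c ≠ 0) :
    relEnt τ (c • ((1 : Matrix a a ℂ) ⊗ₖ r2B τ)) =
      vN (r2B τ) - vN τ - τ.trace.re * Real.logb 2 c := by
  have hB := (posSemidef_r2B hτ).1
  have hmlog : mlog (c • ((1 : Matrix a a ℂ) ⊗ₖ r2B τ)) = 1 ⊗ₖ mlog (c • r2B τ) := by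
    rw [← Matrix.kronecker_smul]
    exact mlog_map (oneKronecker a b) (hB.smul (IsSelfAdjoint.all c))
  rw [relEnt_eq_neg_vN_sub hτ.1, hmlog, trace_mul_one_kronecker, re_trace_mul_mlog_smul hB hc,
    trace_r2B]
  ring

end ReducedState

section UnbiasedBasis

variable {a b : Type*} [Fintype a] [Fintype b] [DecidableEq b]

lemma conj_kronecker_one_apply (F : Matrix a a ℂ) (M : Matrix (a × b) (a × b) ℂ) (p q : a × b) :
    ((F ⊗ₖ (1 : Matrix b b ℂ))ᴴ * M * (F ⊗ₖ (1 : Matrix b b ℂ))) p q =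
      ∑ l, ∑ k, star (F k p.1) * M (k, p.2) (l, q.2) * F l q.1 := by
  simp only [Matrix.mul_apply, Fintype.sum_prod_type, Matrix.conjTranspose_apply,
    Matrix.kroneckerMap_apply, Matrix.one_apply]
  refine Finset.sum_congr rfl fun l _ => ?_
  simp [Finset.sum_mul, apply_ite (starRingEnd ℂ), ite_mul]

variable [DecidableEq a]

/-- `F` is unitary and its columns form a basis mutually unbiased with the standard one. -/
structure IsUnbiasedBasis (F : Matrix a a ℂ) : Prop where
  mem_unitaryGroup : F ∈ Matrix.unitaryGroup a ℂ
  normSq_apply : ∀ k j, Complex.normSq (F k j) = (Fintype.card a : ℝ)⁻¹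

/-- Dephasing of the first factor in the orthonormal basis formed by the columns of a unitary `F`.
For `F = fourierMat d` this is `dephaseXA d`. -/
def dephaseIn (F : Matrix a a ℂ) (M : Matrix (a × b) (a × b) ℂ) : Matrix (a × b) (a × b) ℂ :=
  (F ⊗ₖ (1 : Matrix b b ℂ)) *
    dephaseA ((F ⊗ₖ (1 : Matrix b b ℂ))ᴴ * M * (F ⊗ₖ (1 : Matrix b b ℂ))) *
    (F ⊗ₖ (1 : Matrix b b ℂ))ᴴ

lemma dephaseA_conj_dephaseA {F : Matrix a a ℂ} (hF : IsUnbiasedBasis F)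
    (M : Matrix (a × b) (a × b) ℂ) :
    dephaseA ((F ⊗ₖ (1 : Matrix b b ℂ))ᴴ * dephaseA M * (F ⊗ₖ (1 : Matrix b b ℂ))) =
      (Fintype.card a : ℝ)⁻¹ • ((1 : Matrix a a ℂ) ⊗ₖ r2B M) := by
  ext p q
  rw [dephaseA_apply, Matrix.smul_apply, Matrix.kroneckerMap_apply, Matrix.one_apply]
  split_ifs with hpq
  · have hterm (l : a) : ∑ k, star (F k p.1) * dephaseA M (k, p.2) (l, q.2) * F l q.1 =
        ((Fintype.card a : ℝ)⁻¹ : ℝ) * M (l, p.2) (l, q.2) := by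
      rw [Finset.sum_eq_single_of_mem l (Finset.mem_univ l) fun k _ hk => by
          rw [dephaseA_apply, if_neg hk, mul_zero, zero_mul],
        dephaseA_apply, if_pos rfl, ← hpq, mul_right_comm, Complex.star_def,
        ← Complex.normSq_eq_conj_mul_self, hF.normSq_apply]
    rw [conj_kronecker_one_apply, Finset.sum_congr rfl fun l _ => hterm l, ← Finset.mul_sum,
      one_mul, Complex.real_smul]
    rfl
  · rw [zero_mul, smul_zero]

lemma vN_dephaseIn {F : Matrix a a ℂ} (hF : F ∈ Matrix.unitaryGroup a ℂ)
    {ρ : Matrix (a × b) (a × b) ℂ} (hρ : ρ.PosSemidef) :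
    vN (dephaseIn F ρ) =
      vN (dephaseA ((F ⊗ₖ (1 : Matrix b b ℂ))ᴴ * ρ * (F ⊗ₖ (1 : Matrix b b ℂ)))) :=
  vN_conj (Matrix.kronecker_mem_unitary hF (one_mem _))
    (posSemidef_dephaseA (hρ.conjTranspose_mul_mul_same _)).1

end UnbiasedBasis

section Fourier

variable {d : ℕ}

lemma norm_qomega (d : ℕ) : ‖qomega d‖ = 1 := by
  rw [qomega, Complex.norm_exp]
  simp

lemma normSq_fourierMat_apply (k j : Fin d) : Complex.normSq (fourierMat d k j) = (d : ℝ)⁻¹ := by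
  rw [fourierMat, Matrix.of_apply, Complex.normSq_eq_norm_sq, norm_div, norm_pow, norm_qomega,
    one_pow, Complex.norm_real, Real.norm_of_nonneg (Real.sqrt_nonneg _), div_pow,
    Real.sq_sqrt (Nat.cast_nonneg d), one_pow, one_div]

lemma star_fourierMat_apply_mul (k i j : Fin d) :
    star (fourierMat d k i) * fourierMat d k j =
      ((qomega d)⁻¹ ^ (i : ℕ) * qomega d ^ (j : ℕ)) ^ (k : ℕ) / d := by
  have hstar : star (qomega d) = (qomega d)⁻¹ := (Complex.inv_eq_conj (norm_qomega d)).symm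
  have hsqrt : (Real.sqrt d : ℂ) * (Real.sqrt d : ℂ) = d := by
    rw [← Complex.ofReal_mul, Real.mul_self_sqrt (Nat.cast_nonneg d), Complex.ofReal_natCast]
  simp only [fourierMat, Matrix.of_apply]
  rw [star_div₀, star_pow, hstar, Complex.star_def, Complex.conj_ofReal, div_mul_div_comm, hsqrt,
    mul_pow, ← pow_mul, ← pow_mul]

lemma sum_inv_pow_mul_pow_eq_zero {K : Type*} [Field K] {ζ : K} (hζ : IsPrimitiveRoot ζ d)
    {i j : Fin d} (hij : i ≠ j) : ∑ k : Fin d, (ζ⁻¹ ^ (i : ℕ) * ζ ^ (j : ℕ)) ^ (k : ℕ) = 0 := by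
  set z := ζ⁻¹ ^ (i : ℕ) * ζ ^ (j : ℕ) with hz
  have hζ0 : ζ ≠ 0 := hζ.ne_zero (Nat.ne_zero_of_lt i.2)
  have hz1 : z ≠ 1 := fun h => by
    rw [hz, inv_pow, inv_mul_eq_one₀ (pow_ne_zero _ hζ0)] at h
    exact hij (Fin.ext (hζ.pow_inj i.2 j.2 h))
  have hzd : z ^ d = 1 := by
    rw [hz, mul_pow, pow_right_comm, pow_right_comm ζ, inv_pow, hζ.pow_eq_one, inv_one, one_pow,
      one_pow, one_mul]
  rw [Fin.sum_univ_eq_sum_range (fun k => z ^ k), geom_sum_eq hz1, hzd, sub_self, zero_div]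

lemma fourierMat_mem_unitaryGroup (d : ℕ) : fourierMat d ∈ Matrix.unitaryGroup (Fin d) ℂ := by
  rw [Matrix.mem_unitaryGroup_iff']
  ext i j
  have hd : d ≠ 0 := Nat.ne_zero_of_lt i.2
  have hζ : IsPrimitiveRoot (qomega d) d := Complex.isPrimitiveRoot_exp d hd
  rw [Matrix.mul_apply, Matrix.one_apply]
  simp only [Matrix.star_apply, star_fourierMat_apply_mul, ← Finset.sum_div]
  split_ifs with hij
  · have hone : (qomega d)⁻¹ ^ (i : ℕ) * qomega d ^ (j : ℕ) = 1 := by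
      rw [hij, ← mul_pow, inv_mul_cancel₀ (hζ.ne_zero hd), one_pow]
    simp only [hone, one_pow, Finset.sum_const, Finset.card_univ, Fintype.card_fin, nsmul_one]
    exact div_self (Nat.cast_ne_zero.2 hd)
  · rw [sum_inv_pow_mul_pow_eq_zero hζ hij, zero_div]

lemma isUnbiasedBasis_fourierMat (d : ℕ) : IsUnbiasedBasis (fourierMat d) where
  mem_unitaryGroup := fourierMat_mem_unitaryGroup d
  normSq_apply k j := by rw [normSq_fourierMat_apply, Fintype.card_fin]

end Fourier

theorem cond_entropy_uncertainty_general {a b : Type*} [Fintype a] [DecidableEq a] [Nonempty a]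
    [Fintype b] [DecidableEq b] {F : Matrix a a ℂ} (hF : IsUnbiasedBasis F)
    {ρ : Matrix (a × b) (a × b) ℂ} (hρ : ρ.PosSemidef) :
    (vN (dephaseA ρ) - vN (r2B ρ)) + (vN (dephaseIn F ρ) - vN (r2B ρ)) ≥
      ρ.trace.re * Real.logb 2 (Fintype.card a) + (vN ρ - vN (r2B ρ)) := by
  set K := (F ⊗ₖ (1 : Matrix b b ℂ))ᴴ with hK
  have hKmem : K ∈ Matrix.unitaryGroup (a × b) ℂ :=
    Unitary.star_mem (Matrix.kronecker_mem_unitary hF.mem_unitaryGroup (one_mem _))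
  have hKadj : Kᴴ = F ⊗ₖ (1 : Matrix b b ℂ) := Matrix.conjTranspose_conjTranspose _
  set τ := dephaseA (K * ρ * Kᴴ) with hτ
  have hρK : (K * ρ * Kᴴ).PosSemidef := hρ.mul_mul_conjTranspose_same K
  have hB : r2B τ = r2B ρ := by
    rw [hτ, r2B_dephaseA, hK, Matrix.conjTranspose_kronecker, Matrix.conjTranspose_one]
    exact r2B_conj_kronecker_one (Unitary.star_mem hF.mem_unitaryGroup) ρ
  have hω : dephaseA (K * dephaseA ρ * Kᴴ) =
      (Fintype.card a : ℝ)⁻¹ • ((1 : Matrix a a ℂ) ⊗ₖ r2B τ) := by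
    rw [hB, hKadj, dephaseA_conj_dephaseA hF]
  have hle := relEnt_dephaseA_conj_dephaseA_le hKmem hρ
  rw [hω] at hle
  have hX : vN (dephaseIn F ρ) = vN τ := by
    rw [vN_dephaseIn hF.mem_unitaryGroup hρ, ← hK, ← hKadj]
  rw [relEnt_smul_one_kronecker_r2B (posSemidef_dephaseA hρK)
    (inv_ne_zero (Nat.cast_ne_zero.2 Fintype.card_ne_zero)), hB, ← trace_r2B, hB, trace_r2B,
    Real.logb_inv] at hle
  linarith

/-- for any bipartite state ρ^{AB} with dim A = d,
S(Z^A|B)_ρ + S(X^A|B)_ρ ≥ log₂ d + S(A|B)_ρ. -/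
theorem cond_entropy_uncertainty (d : ℕ) [NeZero d] {b : Type*} [Fintype b] [DecidableEq b]
    (ρ : Matrix (Fin d × b) (Fin d × b) ℂ) (hρ : IsDensity ρ) :
    (vN (dephaseA ρ) - vN (r2B ρ)) + (vN (dephaseXA d ρ) - vN (r2B ρ))
      ≥ Real.logb 2 d + (vN ρ - vN (r2B ρ)) := by
  have h := cond_entropy_uncertainty_general (isUnbiasedBasis_fourierMat d) hρ.1
  rwa [hρ.2, Complex.one_re, one_mul, Fintype.card_fin] at h
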